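/- Let s, r be integers with r/2 ≤ s < r (or s = r/2), and set t = r − s. There is a constant C such that for every sufficiently small γ > 0 there is δ₀ > 0 such that for every δ ∈ (0, δ₀] and all sufficiently large n the following holds. If G is an n-vertex graph with minimum degree δ(G) ≥ (1 − s/r − δ)·n, then one of the following holds: (i) there is a subset X ⊆ V(G) with |X| ≥ (s/r − γ)·n containing at most δn² edges of G; or (ii) if s > r/2, there is a collection 𝒞 of pairwise vertex-disjoint copies of K₂ and of Q_{s,t} in G covering all but at most C vertices of G, such that 𝒞 contains a (δ/2, 2)-absorber; or (iii) if s = r/2, there is a collection 𝒞 of pairwise vertex-disjoint copies of K₃ and K₂ in G covering all but at most C vertices of G, such that 𝒞 contains a (δ/2, 3)-absorber. -/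

import Mathlib

open Finset
open scoped Classical

/-- The degree of a vertex (number of neighbours). -/
noncomputable def degR {V : Type*} (G : SimpleGraph V) (v : V) : ℕ :=
  Nat.card (G.neighborSet v)

/-- The number of edges of a graph on `Fin n`. -/
noncomputable def edgeCount {n : ℕ} (H : SimpleGraph (Fin n)) : ℕ := Nat.card H.edgeSet

/-- The probability that the binomial random graph `G_{n,p}` satisfies the property `P`. -/
noncomputable def Pr (n : ℕ) (p : ℝ) (P : SimpleGraph (Fin n) → Prop) : ℝ :=
  ∑ H : SimpleGraph (Fin n),
    if P H then p ^ edgeCount H * (1 - p) ^ (n.choose 2 - edgeCount H) else 0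

/-- `G` has a `K_r`-factor: a partition of the vertex set into `r`-cliques. -/
def HasCliqueFactor {n : ℕ} (G : SimpleGraph (Fin n)) (r : ℕ) : Prop :=
  ∃ P : Finpartition (Finset.univ : Finset (Fin n)), ∀ c ∈ P.parts, G.IsNClique r c

/-- The threshold function `p_s(n)`: `log n / n` if `s = 2` and `n^{-φ(s)}` with
`φ(s) = 2s/((s-1)(s+2))` if `s ≥ 3`. -/
noncomputable def pThr (s n : ℕ) : ℝ :=
  if s = 2 then Real.log n / n
  else (n : ℝ) ^ (-(2 * (s : ℝ)) / (((s : ℝ) - 1) * ((s : ℝ) + 2)))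

/-- The number of edges of `G` within the vertex set `S`. -/
noncomputable def edgesIn {V : Type*} (G : SimpleGraph V) (S : Set V) : ℕ :=
  Nat.card {e : Sym2 V // e ∈ G.edgeSet ∧ ∀ v ∈ e, v ∈ S}

/-- The number of ordered adjacent pairs between `S` and `T`. -/
noncomputable def edgesBtw {V : Type*} (G : SimpleGraph V) (S T : Set V) : ℕ :=
  Nat.card {p : V × V // p.1 ∈ S ∧ p.2 ∈ T ∧ G.Adj p.1 p.2}

/-- The edge density of the pair `(S, T)` in `G`. -/
noncomputable def density {V : Type*} (G : SimpleGraph V) (S T : Set V) : ℝ :=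
  (edgesBtw G S T : ℝ) / ((S.ncard : ℝ) * (T.ncard : ℝ))

/-- The pair `(S, T)` is `(ε, d)`-regular in `G`. -/
def IsRegularPair {V : Type*} (G : SimpleGraph V) (S T : Set V) (ε d : ℝ) : Prop :=
  ∀ X ⊆ S, ∀ Y ⊆ T, ε * S.ncard ≤ (X.ncard : ℝ) → ε * T.ncard ≤ (Y.ncard : ℝ) →
    |density G X Y - d| < ε

/-- The pair `(S, T)` is `(ε, d, ϑ)`-super-regular in `G`. -/
def IsSuperRegularPair {V : Type*} (G : SimpleGraph V) (S T : Set V) (ε d ϑ : ℝ) : Prop :=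
  IsRegularPair G S T ε d ∧
  (∀ v ∈ S, ϑ * T.ncard ≤ ((T ∩ G.neighborSet v).ncard : ℝ)) ∧
  (∀ v ∈ T, ϑ * S.ncard ≤ ((S ∩ G.neighborSet v).ncard : ℝ))

/-- The graph `Q_{s,t}` on `L ⊕ M ⊕ N` where `|L| = s - t`, `|M| = |N| = t`: a complete
bipartite graph between `L` and `M` together with a perfect matching between `M` and `N`. -/
def Qgraph (s t : ℕ) : SimpleGraph (Fin (s - t) ⊕ Fin t ⊕ Fin t) :=
  SimpleGraph.fromRel (fun x y =>
    (∃ a b, x = Sum.inl a ∧ y = Sum.inr (Sum.inl b)) ∨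
    (∃ b, x = Sum.inr (Sum.inl b) ∧ y = Sum.inr (Sum.inr b)))

/-- `𝒜` is a `(δ, g)`-absorber in the `n`-vertex graph `G`. -/
def IsAbsorber {n : ℕ} (G : SimpleGraph (Fin n)) (δ : ℝ) (g : ℕ)
    (𝒜 : Finset (Finset (Fin n))) : Prop :=
  (∀ c ∈ 𝒜, G.IsNClique g c) ∧
  (((𝒜.biUnion id).card : ℝ) ≤ δ * n) ∧
  (∀ x : Fin n, δ ^ 2 / (24 * (g : ℝ) ^ 2) * n ≤
    (((𝒜.filter fun c => ∃ y ∈ c, G.Adj x y).card : ℝ)))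

/-!
If every vertex stays in a `g`-clique after deleting a few vertices, choose disjoint cliques
greedily, with one root in each, so that the potential `∑ₓ 2 ^ (-|N(x) ∩ D|)` of the set `D` of
roots decays exponentially. In the end every vertex has linearly many neighbours in `D`. This gives
the absorber, and for `s > r / 2` also a second such packing of edges, the reserve.

Next take a maximum matching `M` of the rest, with uncovered set `U`. Since `M` admits no augmenting
path of length three or five, `U` together with the partners of the forks (matched vertices with at
least two neighbours in `U`) is independent. If there is no large sparse set, this bounds
`|U| + |forks|`.

* For `s = r / 2`, sum the degrees of three vertices of `U`: every non-fork counts at most once, so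
  the minimum degree would make the independent set too large. Hence `|U| ≤ 2`.
* For `s > r / 2`, all but boundedly many vertices of `U` are adjacent to many forks, and a
  Kővári–Sós–Turán argument finds `K_{s-t,t}` between `U` and the forks, which with the `t` matching
  edges forms `Q_{s,t}`. Repeating this leaves a number of vertices that depends on `γ`, and
  repeating it with the roots of the reserve in place of the forks leaves at most `C` vertices.
-/

section Packing

variable {V : Type*} {P Q : Finset V → Prop} {F R S : Finset (Finset V)} {X c d : Finset V} {x : V}

/-- A family of pairwise disjoint vertex sets, all of which satisfy `P`. The set of vertices that
it covers is `F.biUnion id`. -/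
structure IsPacking (P : Finset V → Prop) (F : Finset (Finset V)) : Prop where
  prop : ∀ c ∈ F, P c
  pairwiseDisjoint : (F : Set (Finset V)).PairwiseDisjoint id

namespace IsPacking

theorem mono (hF : IsPacking P F) (h : ∀ c, P c → Q c) : IsPacking Q F :=
  ⟨fun c hc ↦ h c (hF.prop c hc), hF.pairwiseDisjoint⟩

theorem eq_of_mem (hF : IsPacking P F) (hc : c ∈ F) (hd : d ∈ F) (hxc : x ∈ c) (hxd : x ∈ d) :
    c = d :=
  hF.pairwiseDisjoint.elim_finset hc hd x hxc hxd

variable [DecidableEq V]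

theorem union (hF : IsPacking P F) (hS : IsPacking P S)
    (h : Disjoint (F.biUnion id) (S.biUnion id)) : IsPacking P (F ∪ S) where
  prop c hc := (mem_union.1 hc).elim (hF.prop c) (hS.prop c)
  pairwiseDisjoint := by
    rw [coe_union, Set.pairwiseDisjoint_union]
    exact ⟨hF.pairwiseDisjoint, hS.pairwiseDisjoint, fun c hc d hd _ ↦
      h.mono (subset_biUnion_of_mem id hc) (subset_biUnion_of_mem id hd)⟩

theorem disjoint_biUnion_sdiff (hF : IsPacking P F) (hR : R ⊆ F) :
    Disjoint ((F \ R).biUnion id) (R.biUnion id) := by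
  refine (disjoint_biUnion_left _ _ _).2 fun c hc ↦ (disjoint_biUnion_right _ _ _).2 fun d hd ↦ ?_
  obtain ⟨hcF, hcR⟩ := mem_sdiff.1 hc
  exact hF.pairwiseDisjoint hcF (hR hd) fun h ↦ hcR (h ▸ hd)

theorem disjoint_biUnion_exchange (hF : IsPacking P F) (hR : R ⊆ F)
    (hcover : S.biUnion id ⊆ R.biUnion id ∪ X) (hX : Disjoint X (F.biUnion id)) :
    Disjoint ((F \ R).biUnion id) (S.biUnion id) :=
  (disjoint_union_right.2 ⟨hF.disjoint_biUnion_sdiff hR,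
    (hX.mono_right (biUnion_subset_biUnion_of_subset_left id sdiff_subset)).symm⟩).mono_right hcover

theorem exchange (hF : IsPacking P F) (hS : IsPacking P S) (hR : R ⊆ F)
    (hcover : S.biUnion id ⊆ R.biUnion id ∪ X) (hX : Disjoint X (F.biUnion id)) :
    IsPacking P (F \ R ∪ S) :=
  IsPacking.union ⟨fun c hc ↦ hF.prop c (sdiff_subset hc),
    hF.pairwiseDisjoint.subset (coe_subset.2 sdiff_subset)⟩ hS
    (hF.disjoint_biUnion_exchange hR hcover hX)

theorem insert (hF : IsPacking P F) (hc : P c) (h : Disjoint c (F.biUnion id)) :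
    IsPacking P (insert c F) where
  prop := (forall_mem_insert ..).2 ⟨hc, hF.prop⟩
  pairwiseDisjoint := by
    rw [coe_insert]
    exact hF.pairwiseDisjoint.insert fun d hd _ ↦ h.mono_right (subset_biUnion_of_mem id hd)

end IsPacking

theorem isPacking_empty : IsPacking P ∅ := ⟨by simp, by simp⟩

end Packing

section Edges

variable {V : Type*} [DecidableEq V] {G : SimpleGraph V} {F : Finset (Finset V)} {a b x : V}

theorem isNClique_pair (h : G.Adj a b) : G.IsNClique 2 {a, b} :=
  G.isNClique_iff.2 ⟨by simpa [coe_pair, SimpleGraph.isClique_pair] using fun _ ↦ h,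
    card_pair h.ne⟩

theorem exists_pair_mem_of_isNClique_two (hF : ∀ c ∈ F, G.IsNClique 2 c) (hx : x ∈ F.biUnion id) :
    ∃ y, G.Adj x y ∧ {x, y} ∈ F := by
  obtain ⟨c, hc, hxc⟩ := mem_biUnion.1 hx
  obtain ⟨a, b, hab, rfl⟩ := card_eq_two.1 (hF c hc).card_eq
  have hadj : G.Adj a b := (hF _ hc).isClique (by simp) (by simp) hab
  rcases mem_insert.1 hxc with rfl | hxb
  · exact ⟨b, hadj, hc⟩
  · rw [mem_singleton.1 hxb]
    exact ⟨a, hadj.symm, pair_comm a b ▸ hc⟩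

theorem exists_partner_of_isNClique_two (hF : ∀ c ∈ F, G.IsNClique 2 c) :
    ∃ p : V → V, ∀ x ∈ F.biUnion id, G.Adj x (p x) ∧ {x, p x} ∈ F := by
  choose! p hp using fun x (hx : x ∈ F.biUnion id) ↦ exists_pair_mem_of_isNClique_two hF hx
  exact ⟨p, hp⟩

/-- `p` assigns to each vertex of `A` the other end of an edge of the family `F`, in such a way
that no edge of `F` is assigned to both of its ends. -/
structure IsPartner (G : SimpleGraph V) (F : Finset (Finset V)) (A : Finset V) (p : V → V) :
    Prop where
  adj : ∀ a ∈ A, G.Adj a (p a)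
  pair_mem : ∀ a ∈ A, {a, p a} ∈ F
  notMem : ∀ a ∈ A, p a ∉ A

namespace IsPartner

variable {P : Finset V → Prop} {S : Finset (Finset V)} {A T : Finset V} {p : V → V}

theorem mono (hp : IsPartner G F A p) (h : T ⊆ A) : IsPartner G F T p :=
  ⟨fun a ha ↦ hp.adj a (h ha), fun a ha ↦ hp.pair_mem a (h ha),
    fun a ha ha' ↦ hp.notMem a (h ha) (h ha')⟩

theorem mono_left (hp : IsPartner G F A p) (h : F ⊆ S) : IsPartner G S A p :=
  ⟨hp.adj, fun a ha ↦ h (hp.pair_mem a ha), hp.notMem⟩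

theorem eq_of_mem_pair (hp : IsPartner G F A p) (ha : a ∈ A) (hb : b ∈ A)
    (h : a ∈ ({b, p b} : Finset V)) : a = b :=
  (mem_insert.1 h).resolve_right fun h ↦ hp.notMem b hb (mem_singleton.1 h ▸ ha)

theorem injOn (hp : IsPartner G F A p) (hF : IsPacking P F) : Set.InjOn p A := fun a ha b hb h ↦
  hp.eq_of_mem_pair ha hb <|
    hF.eq_of_mem (hp.pair_mem a ha) (hp.pair_mem b hb) (x := p a) (by simp) (by simp [h]) ▸
      mem_insert_self _ _

theorem image_subset_biUnion (hp : IsPartner G F A p) : A.image p ⊆ F.biUnion id :=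
  image_subset_iff.2 fun a ha ↦ mem_biUnion.2 ⟨_, hp.pair_mem a ha, by simp⟩

theorem disjoint_image (hp : IsPartner G F A p) : Disjoint A (A.image p) :=
  disjoint_right.2 <| forall_mem_image.2 hp.notMem

end IsPartner

end Edges

section Counting

theorem card_filter_le_card_filter_sdiff_add {α : Type*} [DecidableEq α] (A T : Finset α)
    (q : α → Prop) : #{a ∈ A | q a} ≤ #{a ∈ A \ T | q a} + #T := by
  have hsub : {a ∈ A | q a} \ T ⊆ {a ∈ A \ T | q a} := fun a ha ↦ by
    simp_all only [mem_sdiff, mem_filter, not_false_eq_true, and_self]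
  exact (Nat.le_add_of_sub_le (le_card_sdiff T _)).trans (by gcongr)

variable {α β : Type*} {r : α → β → Prop} {s : Finset α} {t : Finset β}

theorem exists_mul_sum_le_sum_bipartiteBelow {c : ℝ} {w : α → ℝ} (ht : t.Nonempty)
    (hw : ∀ a ∈ s, 0 ≤ w a) (hr : ∀ a ∈ s, c * #t ≤ #(t.bipartiteAbove r a)) :
    ∃ b ∈ t, c * ∑ a ∈ s, w a ≤ ∑ a ∈ s.bipartiteBelow r b, w a := by
  refine exists_le_of_sum_le ht ?_
  calc ∑ _b ∈ t, c * ∑ a ∈ s, w a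
      = ∑ a ∈ s, c * #t * w a := by rw [sum_const, nsmul_eq_mul, ← mul_sum]; ring
    _ ≤ ∑ a ∈ s, #(t.bipartiteAbove r a) * w a :=
        sum_le_sum fun a ha ↦ mul_le_mul_of_nonneg_right (hr a ha) (hw a ha)
    _ = ∑ a ∈ s, ∑ _b ∈ t.bipartiteAbove r a, w a := by simp only [sum_const, nsmul_eq_mul]
    _ = ∑ b ∈ t, ∑ a ∈ s.bipartiteBelow r b, w a :=
        sum_sum_bipartiteAbove_eq_sum_sum_bipartiteBelow r fun a _ ↦ w a

end Counting

section RootedPacking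

variable {V : Type*} [DecidableEq V] {G : SimpleGraph V} {g : ℕ} {W D T : Finset V}
  {𝒜 : Finset (Finset V)} {y : V}

/-- A packing of `g`-cliques that avoids `W`, together with a set `D` containing exactly one vertex
(the root) of each of its cliques. -/
structure IsRootedPacking (G : SimpleGraph V) (g : ℕ) (W : Finset V) (𝒜 : Finset (Finset V))
    (D : Finset V) : Prop where
  isPacking : IsPacking (G.IsNClique g) 𝒜
  disjoint : Disjoint W (𝒜.biUnion id)
  subset_biUnion : D ⊆ 𝒜.biUnion id
  card_inter : ∀ c ∈ 𝒜, #(c ∩ D) = 1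

theorem isRootedPacking_empty : IsRootedPacking G g W ∅ ∅ :=
  ⟨isPacking_empty, by simp, by simp, by simp⟩

namespace IsRootedPacking

theorem insert (h : IsRootedPacking G g W 𝒜 D) (hT : G.IsNClique g T) (hy : y ∈ T)
    (hTW : Disjoint T (W ∪ 𝒜.biUnion id)) : IsRootedPacking G g W (insert T 𝒜) (insert y D) := by
  obtain ⟨hTW, hT𝒜⟩ := disjoint_union_right.1 hTW
  refine ⟨h.isPacking.insert hT hT𝒜, ?_, ?_, (forall_mem_insert ..).2 ⟨?_, fun c hc ↦ ?_⟩⟩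
  · rw [biUnion_insert]
    exact disjoint_union_right.2 ⟨hTW.symm, h.disjoint⟩
  · rw [biUnion_insert]
    exact insert_subset (mem_union_left _ hy) (h.subset_biUnion.trans subset_union_right)
  · rw [inter_insert_of_mem hy, disjoint_iff_inter_eq_empty.1 (hT𝒜.mono_right h.subset_biUnion)]
    rfl
  · rw [inter_insert_of_notMem fun hyc ↦ ?_, h.card_inter c hc]
    exact disjoint_left.1 hT𝒜 hy (mem_biUnion.2 ⟨c, hc, hyc⟩)

theorem card_filter_le (h : IsRootedPacking G g W 𝒜 D) (q : V → Prop) :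
    #{y ∈ D | q y} ≤ #{c ∈ 𝒜 | ∃ y ∈ c, q y} := by
  have hsub : {y ∈ D | q y} ⊆ {c ∈ 𝒜 | ∃ y ∈ c, q y}.biUnion (· ∩ D) := fun y hy ↦ by
    obtain ⟨hyD, hqy⟩ := mem_filter.1 hy
    obtain ⟨c, hc, hyc⟩ := mem_biUnion.1 (h.subset_biUnion hyD)
    exact mem_biUnion.2 ⟨c, mem_filter.2 ⟨hc, y, hyc, hqy⟩, mem_inter.2 ⟨hyc, hyD⟩⟩
  calc #{y ∈ D | q y} ≤ _ := card_le_card hsub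
    _ ≤ _ * 1 := card_biUnion_le_card_mul _ _ _ fun c hc ↦ (h.card_inter c (mem_filter.1 hc).1).le
    _ = _ := mul_one _

theorem card_eq (h : IsRootedPacking G g W 𝒜 D) : #𝒜 = #D := by
  have hD : 𝒜.biUnion (· ∩ D) = D := by
    rw [← biUnion_inter]
    exact inter_eq_right.2 h.subset_biUnion
  rw [← hD, card_biUnion fun c hc d hd hcd ↦ ?_, sum_congr rfl h.card_inter, sum_const,
    smul_eq_mul, mul_one]
  exact (h.isPacking.pairwiseDisjoint hc hd hcd).mono inter_subset_left inter_subset_left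

theorem card_biUnion_le (h : IsRootedPacking G g W 𝒜 D) : #(𝒜.biUnion id) ≤ g * #D := by
  rw [mul_comm, ← h.card_eq]
  exact card_biUnion_le_card_mul _ _ _ fun c hc ↦ (h.isPacking.prop c hc).card_eq.le

theorem exists_isPartner (h : IsRootedPacking G 2 W 𝒜 D) : ∃ p, IsPartner G 𝒜 D p := by
  obtain ⟨p, hp⟩ := exists_partner_of_isNClique_two h.isPacking.prop
  refine ⟨p, fun a ha ↦ (hp a (h.subset_biUnion ha)).1, fun a ha ↦ (hp a (h.subset_biUnion ha)).2,
    fun a ha hpa ↦ ?_⟩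
  obtain ⟨hadj, hmem⟩ := hp a (h.subset_biUnion ha)
  exact hadj.ne (card_le_one.1 (h.card_inter _ hmem).le a (by simp [ha]) (p a) (by simp [hpa]))

end IsRootedPacking

end RootedPacking

section Potential

variable {V : Type*} [Fintype V] {G : SimpleGraph V} {c : ℝ}

/-- The potential `∑ₓ 2 ^ (-|N(x) ∩ D|)` of a vertex set `D`. It is small only if every vertex has
many neighbours in `D`. -/
noncomputable def potential (G : SimpleGraph V) (D : Finset V) : ℝ :=
  ∑ x, (1 / 2 : ℝ) ^ #{y ∈ D | G.Adj x y}

theorem pow_card_filter_le_potential (D : Finset V) (x : V) :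
    (1 / 2 : ℝ) ^ #{y ∈ D | G.Adj x y} ≤ potential G D :=
  single_le_sum (f := fun x ↦ (1 / 2 : ℝ) ^ #{y ∈ D | G.Adj x y})
    (fun _ _ ↦ by positivity) (mem_univ x)

variable [DecidableEq V] {W D : Finset V} {y : V}

theorem potential_insert (hy : y ∉ D) :
    potential G (insert y D) =
      potential G D - 1 / 2 * ∑ x with G.Adj x y, (1 / 2 : ℝ) ^ #{y ∈ D | G.Adj x y} := by
  rw [potential, potential, sum_filter, mul_sum, ← sum_sub_distrib]
  refine sum_congr rfl fun x _ ↦ ?_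
  rw [filter_insert]
  split_ifs with hxy
  · rw [card_insert_of_notMem fun h ↦ hy (mem_filter.1 h).1, pow_succ]
    ring
  · ring

theorem le_card_sdiff_filter_adj (hdeg : ∀ x, c * Fintype.card V + #W ≤ G.degree x) (x : V) :
    c * Fintype.card V ≤ #{y ∈ univ \ W | G.Adj x y} := by
  have hsplit : (G.degree x : ℝ) ≤ #{y ∈ univ \ W | G.Adj x y} + #W := by
    rw [← G.card_neighborFinset_eq_degree, G.neighborFinset_eq_filter]
    exact_mod_cast card_filter_le_card_filter_sdiff_add univ W (G.Adj x)
  linarith [hdeg x]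

theorem exists_potential_insert_le [Nonempty V] (hc : 0 < c) (hDW : D ⊆ W)
    (hdeg : ∀ x, c * Fintype.card V + #W ≤ G.degree x) :
    ∃ y ∉ W, potential G (insert y D) ≤ (1 - c / 2) * potential G D := by
  have hnbr := le_card_sdiff_filter_adj hdeg
  have hW : (univ \ W).Nonempty := by
    refine nonempty_iff_ne_empty.2 fun h ↦ ?_
    have := hnbr (Classical.arbitrary V)
    have : 0 < c * Fintype.card V := by positivity
    simp_all only [filter_empty, card_empty, Nat.cast_zero]
    linarith
  obtain ⟨y, hy, hle⟩ := exists_mul_sum_le_sum_bipartiteBelow (s := univ) (r := G.Adj) (c := c)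
    (w := fun x ↦ (1 / 2 : ℝ) ^ #{y ∈ D | G.Adj x y}) hW (fun _ _ ↦ by positivity)
    fun x _ ↦ (by gcongr; exact card_le_univ _ : c * #(univ \ W) ≤ _).trans (hnbr x)
  have hyW : y ∉ W := (mem_sdiff.1 hy).2
  refine ⟨y, hyW, ?_⟩
  rw [potential_insert fun h ↦ hyW (hDW h)]
  change c * potential G D ≤ _ at hle
  rw [bipartiteBelow] at hle
  linarith

end Potential

section RobustCliques

variable {V : Type*} {G : SimpleGraph V} {g m : ℕ} {W : Finset V} {c B : ℝ}

/-- Every vertex still lies in a `g`-clique after deleting at most `B` other vertices. -/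
def HasRobustCliques (G : SimpleGraph V) (g : ℕ) (B : ℝ) : Prop :=
  ∀ W : Finset V, #W ≤ B → ∀ y ∉ W, ∃ T, G.IsNClique g T ∧ y ∈ T ∧ Disjoint T W

variable [Fintype V]

theorem le_one_of_mul_card_le_degree {x : V} (h : c * Fintype.card V ≤ G.degree x) : c ≤ 1 := by
  have hcard : 0 < (Fintype.card V : ℝ) := mod_cast Fintype.card_pos_iff.2 ⟨x⟩
  have hlt : (G.degree x : ℝ) < Fintype.card V := mod_cast G.degree_lt_card_verts x
  exact le_of_mul_le_mul_right (by linarith) hcard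

theorem hasRobustCliques_two (h : ∀ v, B < G.degree v) : HasRobustCliques G 2 B := by
  intro W hW y hy
  obtain ⟨z, hz, hzW⟩ : ∃ z ∈ G.neighborFinset y, z ∉ W :=
    exists_mem_notMem_of_card_lt_card (by exact_mod_cast hW.trans_lt (h y))
  rw [G.mem_neighborFinset] at hz
  exact ⟨{y, z}, isNClique_pair hz, by simp, by simp [hy, hzW]⟩

theorem edgesIn_le_card_mul {S : Set V} (h : ∀ x ∈ S, ∀ y ∈ S, G.Adj x y → x ∈ W ∨ y ∈ W) :
    edgesIn G S ≤ #W * Fintype.card V := by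
  have hsub : ({e | e ∈ G.edgeSet ∧ ∀ v ∈ e, v ∈ S} : Finset (Sym2 V)) ⊆
      (W ×ˢ univ).image fun q ↦ s(q.1, q.2) := fun e he ↦ by
    obtain ⟨he, heS⟩ := (mem_filter.1 he).2
    induction e using Sym2.ind with
    | _ x y =>
      rcases h x (heS x (by simp)) y (heS y (by simp)) he with hw | hw
      · exact mem_image.2 ⟨(x, y), by simp [hw], rfl⟩
      · exact mem_image.2 ⟨(y, x), by simp [hw], Sym2.eq_swap⟩
  calc edgesIn G S = #{e | e ∈ G.edgeSet ∧ ∀ v ∈ e, v ∈ S} := by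
        rw [edgesIn, Nat.card_eq_fintype_card, Fintype.card_subtype]
    _ ≤ _ := card_le_card hsub
    _ ≤ _ := card_image_le
    _ = #W * Fintype.card V := by rw [card_product, card_univ]

theorem hasRobustCliques_three (h : ∀ v, B * Fintype.card V < edgesIn G (G.neighborSet v)) :
    HasRobustCliques G 3 B := by
  intro W hW y hy
  obtain ⟨a, ha, b, hb, hab, haW, hbW⟩ :
      ∃ a ∈ G.neighborSet y, ∃ b ∈ G.neighborSet y, G.Adj a b ∧ a ∉ W ∧ b ∉ W := by
    by_contra! hcon
    have hle : (edgesIn G (G.neighborSet y) : ℝ) ≤ #W * Fintype.card V :=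
      mod_cast edgesIn_le_card_mul fun a ha b hb hab ↦
        or_iff_not_imp_left.2 fun haW ↦ hcon a ha b hb hab haW
    exact absurd (h y) (hle.trans (by gcongr)).not_gt
  exact ⟨{y, a, b}, SimpleGraph.is3Clique_triple_iff.2 ⟨ha, hb, hab⟩, by simp,
    by simp [hy, haW, hbW]⟩

variable [DecidableEq V]

theorem exists_isRootedPacking_potential_le [Nonempty V] (hc : 0 < c)
    (hG : HasRobustCliques G g B) (hdeg : ∀ x, c * Fintype.card V + B ≤ G.degree x) {m : ℕ}
    (hm : #W + g * m ≤ B) : ∃ 𝒜 D, IsRootedPacking G g W 𝒜 D ∧ #D = m ∧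
      potential G D ≤ Fintype.card V * (1 - c / 2) ^ m := by
  have hB : 0 ≤ B := le_trans (by positivity) hm
  have hc1 : c ≤ 1 :=
    le_one_of_mul_card_le_degree (le_trans (by linarith) (hdeg (Classical.arbitrary V)))
  induction m with
  | zero => exact ⟨∅, ∅, isRootedPacking_empty, card_empty, by simp [potential]⟩
  | succ m ih =>
    push_cast at hm
    have : (0 : ℝ) ≤ g := by positivity
    obtain ⟨𝒜, D, h𝒜, hD, hpot⟩ := ih (by linarith)
    have hW : (#(W ∪ 𝒜.biUnion id) : ℝ) ≤ B := by
      have h : #(W ∪ 𝒜.biUnion id) ≤ #W + g * m :=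
        (card_union_le _ _).trans (by gcongr; exact hD ▸ h𝒜.card_biUnion_le)
      have : (#(W ∪ 𝒜.biUnion id) : ℝ) ≤ #W + g * m := mod_cast h
      linarith
    obtain ⟨y, hy, hle⟩ := exists_potential_insert_le (W := W ∪ 𝒜.biUnion id) hc
      (h𝒜.subset_biUnion.trans subset_union_right) fun x ↦ le_trans (by linarith) (hdeg x)
    obtain ⟨T, hT, hyT, hTW⟩ := hG _ hW y hy
    refine ⟨_, _, h𝒜.insert hT hyT hTW, ?_, ?_⟩
    · rw [card_insert_of_notMem fun h ↦ hy (mem_union_right _ (h𝒜.subset_biUnion h)), hD]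
    · calc _ ≤ _ := hle
        _ ≤ (1 - c / 2) * (Fintype.card V * (1 - c / 2) ^ m) :=
          mul_le_mul_of_nonneg_left hpot (by linarith)
        _ = _ := by ring

theorem exists_isRootedPacking [Nonempty V] (hc : 0 < c)
    (hG : HasRobustCliques G g B) (hdeg : ∀ x, c * Fintype.card V + B ≤ G.degree x)
    (hm : #W + g * m ≤ B) (hlarge : Fintype.card V * Real.exp (-(c * m / 4)) < 1) :
    ∃ 𝒜 D, IsRootedPacking G g W 𝒜 D ∧ #D = m ∧
      ∀ x, c / 4 * m ≤ #{y ∈ D | G.Adj x y} := by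
  obtain ⟨𝒜, D, h𝒜, hD, hpot⟩ := exists_isRootedPacking_potential_le hc hG hdeg hm
  refine ⟨𝒜, D, h𝒜, hD, fun x ↦ ?_⟩
  by_contra! hlt
  have hB : 0 ≤ B := le_trans (by positivity) hm
  have hc1 : c ≤ 1 := le_one_of_mul_card_le_degree (le_trans (by linarith) (hdeg x))
  set k := #{y ∈ D | G.Adj x y}
  have hexp : Real.exp (-1) ≤ 1 / 2 := by
    rw [Real.exp_neg, one_div]
    exact inv_anti₀ two_pos Real.exp_one_gt_two.le
  refine lt_irrefl (Real.exp (-(c * m / 4))) ?_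
  calc Real.exp (-(c * m / 4)) ≤ Real.exp (k * (-1)) := Real.exp_le_exp.2 (by linarith)
    _ = Real.exp (-1) ^ k := Real.exp_nat_mul _ _
    _ ≤ (1 / 2) ^ k := by gcongr
    _ ≤ Fintype.card V * (1 - c / 2) ^ m := (pow_card_filter_le_potential D x).trans hpot
    _ ≤ Fintype.card V * Real.exp (-(c / 2)) ^ m := by
        gcongr
        · linarith
        · exact Real.one_sub_le_exp_neg _
    _ = Fintype.card V * Real.exp (-(c * m / 4)) * Real.exp (-(c * m / 4)) := by
        rw [mul_assoc, ← Real.exp_nat_mul, ← Real.exp_add]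
        ring_nf
    _ < Real.exp (-(c * m / 4)) := mul_lt_of_lt_one_left (Real.exp_pos _) hlarge

end RobustCliques

section Absorber

open Filter

theorem eventually_mul_exp_neg_lt_one {μ : ℝ} (hμ : 0 < μ) :
    ∀ᶠ n : ℕ in atTop, n * Real.exp (-(μ * n)) < 1 := by
  have hlim := (Real.tendsto_pow_mul_exp_neg_atTop_nhds_zero 1).comp
    (tendsto_natCast_atTop_atTop.const_mul_atTop hμ)
  filter_upwards [hlim.eventually_lt_const hμ] with n hn
  simp only [Function.comp_apply, pow_one, mul_assoc] at hn
  exact lt_of_mul_lt_mul_left (by simpa using hn) hμ.le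

theorem eventually_exists_isRootedPacking {c μ : ℝ} (hc : 0 < c) (hμ : 0 < μ) :
    ∀ᶠ n : ℕ in atTop, ∀ (G : SimpleGraph (Fin n)) (g m : ℕ) (B : ℝ) (W : Finset (Fin n)),
      μ * n ≤ m → HasRobustCliques G g B → (∀ x, c * n + B ≤ G.degree x) → #W + g * m ≤ B →
        ∃ 𝒜 D, IsRootedPacking G g W 𝒜 D ∧ #D = m ∧ ∀ x, c / 4 * m ≤ #{y ∈ D | G.Adj x y} := by
  filter_upwards [eventually_mul_exp_neg_lt_one (μ := c * μ / 4) (by positivity),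
    eventually_gt_atTop 0] with n hlarge hn G g m B W hm hG hdeg hW
  have : NeZero n := ⟨hn.ne'⟩
  refine exists_isRootedPacking hc hG (by simpa using hdeg) hW (lt_of_le_of_lt ?_ hlarge)
  rw [Fintype.card_fin]
  gcongr
  calc c * μ / 4 * n = c * (μ * n) / 4 := by ring
    _ ≤ c * m / 4 := by gcongr

theorem eventually_exists_isAbsorber {c ε : ℝ} {g : ℕ} (hg : 0 < g) (hε : 0 < ε) (hεc : ε ≤ c) :
    ∀ᶠ n : ℕ in atTop, ∀ G : SimpleGraph (Fin n), HasRobustCliques G g (ε * n) →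
      (∀ x, (c + ε) * n ≤ G.degree x) →
        ∃ 𝒜, IsPacking (G.IsNClique g) 𝒜 ∧ IsAbsorber G ε g 𝒜 := by
  have hg' : (1 : ℝ) ≤ g := mod_cast hg
  have hc : 0 < c := hε.trans_le hεc
  filter_upwards [eventually_exists_isRootedPacking hc (μ := ε / (2 * g)) (by positivity),
    (tendsto_natCast_atTop_atTop (R := ℝ)).eventually_ge_atTop (g / ε)] with n hroot hn G hG hdeg
  have hlower : ε / (2 * g) * n ≤ ⌊ε * n / g⌋₊ := by
    refine le_of_eq_of_le (by field_simp) (Nat.div_two_lt_floor ?_).le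
    rw [le_div_iff₀ (by positivity), one_mul, ← div_le_iff₀' hε]
    exact hn
  have hupper : g * (⌊ε * n / g⌋₊ : ℝ) ≤ ε * n := by
    rw [← le_div_iff₀' (by positivity)]
    exact Nat.floor_le (by positivity)
  obtain ⟨𝒜, D, h𝒜, hD, hnbr⟩ := hroot G g ⌊ε * n / g⌋₊ (ε * n) ∅ hlower hG
    (fun x ↦ le_of_eq_of_le (by ring) (hdeg x)) (by simpa using hupper)
  refine ⟨𝒜, h𝒜.isPacking, h𝒜.isPacking.prop, ?_, fun x ↦ ?_⟩
  · have : (#(𝒜.biUnion id) : ℝ) ≤ g * #D := mod_cast h𝒜.card_biUnion_le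
    exact this.trans (hD ▸ hupper)
  · calc ε ^ 2 / (24 * g ^ 2) * n ≤ ε ^ 2 / (8 * g) * n := by
          gcongr
          · norm_num
          · exact le_self_pow₀ hg' two_ne_zero
      _ = ε / 4 * (ε / (2 * g) * n) := by ring
      _ ≤ c / 4 * ⌊ε * n / g⌋₊ := by gcongr
      _ ≤ #{y ∈ D | G.Adj x y} := hnbr x
      _ ≤ _ := mod_cast (h𝒜.card_filter_le (G.Adj x)).trans_eq (by congr!)

end Absorber

section CompletePair

variable {α β : Type*} {r : α → β → Prop} {U : Finset α} {A : Finset β} {k t N : ℕ} {h : ℝ}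

theorem card_mul_le_card_mul_add_card_filter (hr : ∀ u ∈ U, h ≤ #(A.bipartiteAbove r u)) :
    #U * h ≤ #A * k + #U * #{a ∈ A | k ≤ #(U.bipartiteBelow r a)} := by
  have hle : ∀ a ∈ A, #(U.bipartiteBelow r a) ≤
      k + if k ≤ #(U.bipartiteBelow r a) then #U else 0 := fun a _ ↦ by
    split_ifs with hk
    · exact (card_filter_le _ _).trans (Nat.le_add_left _ _)
    · exact (not_le.1 hk).le
  calc (#U * h : ℝ) ≤ ∑ u ∈ U, (#(A.bipartiteAbove r u) : ℝ) := by
        rw [← nsmul_eq_mul]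
        exact card_nsmul_le_sum _ _ _ hr
    _ = ∑ a ∈ A, #(U.bipartiteBelow r a) :=
        mod_cast sum_card_bipartiteAbove_eq_sum_card_bipartiteBelow r
    _ ≤ ∑ a ∈ A, (k + if k ≤ #(U.bipartiteBelow r a) then #U else 0) :=
        mod_cast sum_le_sum hle
    _ = #A * k + #U * #{a ∈ A | k ≤ #(U.bipartiteBelow r a)} := by
        simp only [sum_add_distrib, sum_const, smul_eq_mul, ← sum_filter]
        push_cast
        ring

theorem exists_complete_pair_of_card_le (ht : 0 < t)
    (hA : t * 2 ^ #U ≤ #{a ∈ A | k ≤ #(U.bipartiteBelow r a)}) :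
    ∃ X ⊆ U, ∃ T ⊆ A, #X = k ∧ #T = t ∧ ∀ x ∈ X, ∀ a ∈ T, r x a := by
  choose! S hSsub hScard using fun a (ha : k ≤ #(U.bipartiteBelow r a)) ↦ exists_subset_card_eq ha
  set A' := {a ∈ A | k ≤ #(U.bipartiteBelow r a)}
  have hmaps : ∀ a ∈ A', S a ∈ U.powersetCard k := fun a ha ↦ by
    have hk := (mem_filter.1 ha).2
    exact mem_powersetCard.2 ⟨(hSsub a hk).trans (filter_subset _ _), hScard a hk⟩
  obtain ⟨a₀, ha₀⟩ : A'.Nonempty := card_pos.1 (lt_of_lt_of_le (by positivity) hA)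
  have hcard : #(U.powersetCard k) * t ≤ #A' := by
    rw [card_powersetCard, mul_comm]
    exact le_trans (by gcongr; exact Nat.choose_le_two_pow _ _) hA
  obtain ⟨X, hX, hfiber⟩ :=
    exists_le_card_fiber_of_mul_le_card_of_maps_to hmaps ⟨_, hmaps a₀ ha₀⟩ hcard
  obtain ⟨T, hT, hTcard⟩ := exists_subset_card_eq hfiber
  obtain ⟨hXU, hXcard⟩ := mem_powersetCard.1 hX
  refine ⟨X, hXU, T, fun a ha ↦ (mem_filter.1 (mem_filter.1 (hT ha)).1).1, hXcard, hTcard,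
    fun x hx a ha ↦ ?_⟩
  obtain ⟨haA', rfl⟩ := mem_filter.1 (hT ha)
  exact ((mem_bipartiteBelow r).1 (hSsub a (mem_filter.1 haA').2 hx)).2

theorem exists_complete_pair (ht : 0 < t) (hN : 0 < N) (hNU : N ≤ #U)
    (hAh : #A * k + N * (t * 2 ^ N) ≤ N * h) (hr : ∀ u ∈ U, h ≤ #(A.bipartiteAbove r u)) :
    ∃ X ⊆ U, ∃ T ⊆ A, #X = k ∧ #T = t ∧ ∀ x ∈ X, ∀ a ∈ T, r x a := by
  obtain ⟨U', hU'U, rfl⟩ := exists_subset_card_eq hNU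
  have hcount := card_mul_le_card_mul_add_card_filter (k := k) fun u hu ↦ hr u (hU'U hu)
  have hpopular : (t * 2 ^ #U' : ℝ) ≤ #{a ∈ A | k ≤ #(U'.bipartiteBelow r a)} :=
    le_of_mul_le_mul_left (by linarith) (Nat.cast_pos.2 hN : (0 : ℝ) < #U')
  obtain ⟨X, hX, hrest⟩ := exists_complete_pair_of_card_le ht (mod_cast hpopular)
  exact ⟨X, hX.trans hU'U, hrest⟩

end CompletePair

section Tiles

variable {V : Type*} {G : SimpleGraph V} {s t : ℕ}

/-- A vertex set spanning a copy of `K₂` or of `Q_{s,t}`. -/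
def IsTile (G : SimpleGraph V) (s t : ℕ) (c : Finset V) : Prop :=
  G.IsNClique 2 c ∨ ∃ f : Qgraph s t →g G, Function.Injective f ∧ Set.range f = (c : Set V)

theorem exists_injective_range_eq {α : Type*} {S : Finset α} {n : ℕ} (hS : #S = n) :
    ∃ e : Fin n → α, Function.Injective e ∧ Set.range e = S := by
  refine ⟨fun i ↦ (S.equivFinOfCardEq hS).symm i,
    Subtype.val_injective.comp (Equiv.injective _), ?_⟩
  ext x
  exact ⟨by rintro ⟨i, rfl⟩; exact coe_mem _,
    fun hx ↦ ⟨S.equivFinOfCardEq hS ⟨x, hx⟩, by simp⟩⟩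

variable [DecidableEq V] {F : Finset (Finset V)} {A U X T : Finset V} {p : V → V}

theorem isTile_union_image (hX : #X = s - t) (hT : #T = t) (hXT : ∀ x ∈ X, ∀ a ∈ T, G.Adj x a)
    (hp : ∀ a ∈ T, G.Adj a (p a)) (hinj : Set.InjOn p T) (hXp : Disjoint X (T.image p))
    (hTp : Disjoint T (T.image p)) : IsTile G s t (X ∪ (T ∪ T.image p)) := by
  obtain ⟨eX, hXinj, hXrange⟩ := exists_injective_range_eq hX
  obtain ⟨eT, hTinj, hTrange⟩ := exists_injective_range_eq hT
  have hX_mem (i) : eX i ∈ X := mem_coe.1 (hXrange ▸ Set.mem_range_self i)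
  have hT_mem (i) : eT i ∈ T := mem_coe.1 (hTrange ▸ Set.mem_range_self i)
  have hp_mem (i) : p (eT i) ∈ T.image p := mem_image_of_mem p (hT_mem i)
  have hf : Function.Injective (Sum.elim eX (Sum.elim eT (p ∘ eT))) := by
    refine hXinj.sumElim (hTinj.sumElim
      (fun i j hij ↦ hTinj (hinj (hT_mem i) (hT_mem j) hij))
      fun i j hij ↦ disjoint_left.1 hTp (hT_mem i) (by rw [hij]; exact hp_mem j)) ?_
    rintro i (j | j) hij
    · exact (hXT _ (hX_mem i) _ (hT_mem j)).ne hij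
    · exact disjoint_left.1 hXp (hX_mem i) (by rw [hij]; exact hp_mem j)
  have hrange : Set.range (Sum.elim eX (Sum.elim eT (p ∘ eT))) =
      (X ∪ (T ∪ T.image p) : Finset V) := by
    rw [Set.Sum.elim_range, Set.Sum.elim_range, Set.range_comp, hXrange, hTrange]
    simp
  refine Or.inr ⟨⟨Sum.elim eX (Sum.elim eT (p ∘ eT)), fun {x y} hxy ↦ ?_⟩, hf, hrange⟩
  obtain ⟨-, (⟨i, j, rfl, rfl⟩ | ⟨i, rfl, rfl⟩) | ⟨i, j, rfl, rfl⟩ | ⟨i, rfl, rfl⟩⟩ :=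
    (SimpleGraph.fromRel_adj _ _ _).1 hxy
  · exact hXT _ (hX_mem i) _ (hT_mem j)
  · exact hp _ (hT_mem i)
  · exact (hXT _ (hX_mem i) _ (hT_mem j)).symm
  · exact (hp _ (hT_mem i)).symm

theorem biUnion_image_pair (T : Finset V) (p : V → V) :
    (T.image fun a ↦ ({a, p a} : Finset V)).biUnion id = T ∪ T.image p := by
  ext x
  simp only [mem_biUnion, mem_image, id, exists_exists_and_eq_and, mem_insert, mem_singleton,
    mem_union]
  exact ⟨by rintro ⟨a, ha, rfl | rfl⟩; exacts [.inl ha, .inr ⟨a, ha, rfl⟩],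
    by rintro (hx | ⟨a, ha, rfl⟩); exacts [⟨x, hx, .inl rfl⟩, ⟨a, ha, .inr rfl⟩]⟩

theorem exists_packing_union (hF : IsPacking (IsTile G s t) F) (hp : IsPartner G F A p)
    (hX : #X = s - t) (hXF : Disjoint X (F.biUnion id)) (hTA : T ⊆ A) (hT : #T = t)
    (hXT : ∀ x ∈ X, ∀ a ∈ T, G.Adj x a) :
    ∃ F', IsPacking (IsTile G s t) F' ∧ F'.biUnion id = F.biUnion id ∪ X ∧
      IsPartner G F' (A \ T) p ∧ ∀ c ∈ F, Disjoint c T → c ∈ F' := by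
  have hpT := hp.mono hTA
  set R := T.image fun a ↦ ({a, p a} : Finset V)
  have hR : R ⊆ F := image_subset_iff.2 hpT.pair_mem
  have hRcover : R.biUnion id = T ∪ T.image p := biUnion_image_pair T p
  have htile : IsTile G s t (X ∪ (T ∪ T.image p)) :=
    isTile_union_image hX hT hXT hpT.adj (hpT.injOn hF)
      (hXF.mono_right hpT.image_subset_biUnion) hpT.disjoint_image
  have hkeep : ∀ c ∈ F, Disjoint c T → c ∈ F \ R ∪ {X ∪ (T ∪ T.image p)} := fun c hc hcT ↦ by
    refine mem_union_left _ (mem_sdiff.2 ⟨hc, fun hcR ↦ ?_⟩)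
    obtain ⟨a, ha, rfl⟩ := mem_image.1 hcR
    exact disjoint_left.1 hcT (mem_insert_self _ _) ha
  refine ⟨F \ R ∪ {X ∪ (T ∪ T.image p)}, ?_, ?_, ?_, hkeep⟩
  · refine hF.exchange ⟨by simpa using htile, by simp⟩ hR (X := X) ?_ hXF
    rw [singleton_biUnion, hRcover]
    exact (union_comm _ _).subset
  · rw [union_biUnion, singleton_biUnion, ← hRcover, id, union_left_comm, ← union_biUnion,
      sdiff_union_of_subset hR, union_comm]
  · have hpAT := hp.mono (T := A \ T) sdiff_subset
    refine ⟨hpAT.adj, fun a ha ↦ hkeep _ (hpAT.pair_mem a ha) ?_, hpAT.notMem⟩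
    refine disjoint_right.2 fun b hb hba ↦ (mem_sdiff.1 ha).2 ?_
    rwa [← hp.eq_of_mem_pair (hTA hb) (mem_sdiff.1 ha).1 hba]

theorem exists_packing_card_sdiff_lt {N : ℕ} {h : ℝ} (ht : 0 < t) (hts : t < s) (hN : 0 < N)
    (hF : IsPacking (IsTile G s t) F) (hp : IsPartner G F A p) (hUF : Disjoint U (F.biUnion id))
    (hAh : #A * (s - t : ℕ) + N * (t * 2 ^ N) ≤ N * h)
    (hdeg : ∀ u ∈ U, (s - t : ℕ) * h + t * #U ≤ (s - t : ℕ) * #{a ∈ A | G.Adj u a}) :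
    ∃ F', IsPacking (IsTile G s t) F' ∧ F.biUnion id ⊆ F'.biUnion id ∧
      #(U \ F'.biUnion id) < N ∧ ∀ c ∈ F, Disjoint c A → c ∈ F' := by
  have hk : 0 < s - t := Nat.sub_pos_of_lt hts
  have hk' : (0 : ℝ) < (s - t : ℕ) := mod_cast hk
  induction hj : #U using Nat.strong_induction_on generalizing F A U with
  | _ j ih =>
  subst hj
  rcases lt_or_ge #U N with hUN | hUN
  · exact ⟨F, hF, subset_rfl, (card_le_card sdiff_subset).trans_lt hUN, fun c hc _ ↦ hc⟩
  obtain ⟨X, hXU, T, hTA, hX, hT, hXT⟩ := exists_complete_pair (r := G.Adj) (k := s - t) ht hN hUN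
    hAh fun u hu ↦ le_of_mul_le_mul_left
      ((le_add_of_nonneg_right (by positivity)).trans (hdeg u hu)) hk'
  obtain ⟨F₁, hF₁, hcover, hp₁, hkeep₁⟩ :=
    exists_packing_union hF hp hX (hUF.mono_left hXU) hTA hT hXT
  have hcardU : #(U \ X) + (s - t) = #U := hX ▸ card_sdiff_add_card_eq_card hXU
  have hUF₁ : Disjoint (U \ X) (F₁.biUnion id) := by
    rw [hcover, disjoint_union_right]
    exact ⟨hUF.mono_left sdiff_subset, sdiff_disjoint⟩
  have hdeg₁ (u) (hu : u ∈ U \ X) :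
      (s - t : ℕ) * h + t * #(U \ X) ≤ (s - t : ℕ) * #{a ∈ A \ T | G.Adj u a} := by
    have hle : (#{a ∈ A | G.Adj u a} : ℝ) ≤ #{a ∈ A \ T | G.Adj u a} + t :=
      mod_cast hT ▸ card_filter_le_card_filter_sdiff_add A T (G.Adj u)
    have hcardU' : (#(U \ X) : ℝ) + (s - t : ℕ) = #U := mod_cast hcardU
    have := hdeg u (mem_sdiff.1 hu).1
    nlinarith
  obtain ⟨F', hF', hcover', hlt, hkeep'⟩ := ih _ (by omega) hF₁ hp₁ hUF₁
    (le_trans (by gcongr; exact sdiff_subset) hAh) hdeg₁ rfl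
  refine ⟨F', hF', subset_union_left.trans (hcover ▸ hcover'), lt_of_le_of_lt (card_le_card ?_) hlt,
    fun c hc hcA ↦ hkeep' c (hkeep₁ c hc (hcA.mono_right hTA)) (hcA.mono_right sdiff_subset)⟩
  have hXF' : X ⊆ F'.biUnion id := subset_union_right.trans (hcover ▸ hcover')
  exact fun u hu ↦ mem_sdiff.2
    ⟨mem_sdiff.2 ⟨(mem_sdiff.1 hu).1, fun h ↦ (mem_sdiff.1 hu).2 (hXF' h)⟩, (mem_sdiff.1 hu).2⟩

end Tiles

section MaxMatching

variable {V : Type*} [DecidableEq V] {G : SimpleGraph V} {W : Finset V} {M : Finset (Finset V)}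

/-- A maximum matching of `G - W`, as a family of edges. -/
structure IsMaxMatching (G : SimpleGraph V) (W : Finset V) (M : Finset (Finset V)) : Prop where
  isPacking : IsPacking (G.IsNClique 2) M
  disjoint : Disjoint W (M.biUnion id)
  card_le : ∀ S, IsPacking (G.IsNClique 2) S → Disjoint W (S.biUnion id) → #S ≤ #M

theorem insert_pair_isPacking {S : Finset (Finset V)} {a b : V}
    (hS : IsPacking (G.IsNClique 2) S) (hab : G.Adj a b) (ha : a ∉ S.biUnion id)
    (hb : b ∉ S.biUnion id) :
    IsPacking (G.IsNClique 2) (insert {a, b} S) ∧ #(insert {a, b} S) = #S + 1 := by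
  refine ⟨hS.insert (isNClique_pair hab) ?_, card_insert_of_notMem fun h ↦ ?_⟩
  · rw [disjoint_insert_left, disjoint_singleton_left]
    exact ⟨ha, hb⟩
  · exact ha (mem_biUnion.2 ⟨_, h, mem_insert_self _ _⟩)

theorem exists_isMaxMatching [Finite V] (G : SimpleGraph V) (W : Finset V) :
    ∃ M, IsMaxMatching G W M := by
  have := Fintype.ofFinite V
  obtain ⟨M, hM, hmax⟩ := exists_max_image
    {M : Finset (Finset V) | IsPacking (G.IsNClique 2) M ∧ Disjoint W (M.biUnion id)} card
    ⟨∅, mem_filter.2 ⟨mem_univ _, isPacking_empty, by simp⟩⟩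
  obtain ⟨hpack, hdisj⟩ := (mem_filter.1 hM).2
  exact ⟨M, hpack, hdisj, fun S hS hSW ↦ hmax S (mem_filter.2 ⟨mem_univ _, hS, hSW⟩)⟩

variable [Fintype V]

/-- The vertices outside `W` that are missed by the family `M`. -/
def uncovered (W : Finset V) (M : Finset (Finset V)) : Finset V := univ \ (W ∪ M.biUnion id)

/-- The vertices covered by `M` that have at least two uncovered neighbours. -/
noncomputable def forks (G : SimpleGraph V) (W : Finset V) (M : Finset (Finset V)) : Finset V :=
  {a ∈ M.biUnion id | 1 < #{u ∈ uncovered W M | G.Adj u a}}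

/-- The neighbours of `u` that are covered by `M` but are not forks. -/
noncomputable def strayNeighbors (G : SimpleGraph V) (W : Finset V) (M : Finset (Finset V))
    (u : V) : Finset V :=
  {x ∈ M.biUnion id \ forks G W M | G.Adj u x}

theorem disjoint_uncovered : Disjoint (uncovered W M) (M.biUnion id) :=
  sdiff_disjoint.mono_right subset_union_right

theorem disjoint_uncovered_left : Disjoint W (uncovered W M) :=
  (sdiff_disjoint.mono_right subset_union_left).symm

theorem exists_mem_uncovered_adj_ne {a : V} (ha : a ∈ forks G W M) (u : V) :
    ∃ v ∈ uncovered W M, v ≠ u ∧ G.Adj v a := by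
  obtain ⟨v, hv, hvu⟩ := exists_mem_ne (mem_filter.1 ha).2 u
  exact ⟨v, (mem_filter.1 hv).1, hvu, (mem_filter.1 hv).2⟩

theorem pairwiseDisjoint_strayNeighbors :
    (uncovered W M : Set V).PairwiseDisjoint (strayNeighbors G W M) := by
  refine fun u hu v hv huv ↦ disjoint_left.2 fun x hxu hxv ↦ ?_
  obtain ⟨hx, hux⟩ := mem_filter.1 hxu
  obtain ⟨hxM, hxfork⟩ := mem_sdiff.1 hx
  exact hxfork <| mem_filter.2 ⟨hxM, one_lt_card.2
    ⟨u, mem_filter.2 ⟨hu, hux⟩, v, mem_filter.2 ⟨hv, (mem_filter.1 hxv).2⟩, huv⟩⟩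

namespace IsMaxMatching

variable {R S : Finset (Finset V)} {a b a' b' u v : V}

theorem card_le_of_exchange (hM : IsMaxMatching G W M) (hR : R ⊆ M)
    (hS : IsPacking (G.IsNClique 2) S) (hcover : S.biUnion id ⊆ R.biUnion id ∪ uncovered W M) :
    #S ≤ #R := by
  have hdisj := hM.isPacking.disjoint_biUnion_exchange hR hcover disjoint_uncovered
  have hW : Disjoint W ((M \ R ∪ S).biUnion id) := by
    rw [union_biUnion, disjoint_union_right]
    have hsub {F} (hF : F ⊆ M) : Disjoint W (F.biUnion id) :=
      hM.disjoint.mono_right (biUnion_subset_biUnion_of_subset_left id hF)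
    exact ⟨hsub sdiff_subset,
      (disjoint_union_right.2 ⟨hsub hR, disjoint_uncovered_left⟩).mono_right hcover⟩
  have hne : Disjoint (M \ R) S := disjoint_left.2 fun c hcM hcS ↦ by
    obtain ⟨x, hx⟩ : c.Nonempty := card_pos.1 (by rw [(hS.prop c hcS).card_eq]; exact two_pos)
    exact disjoint_left.1 hdisj (mem_biUnion.2 ⟨c, hcM, hx⟩) (mem_biUnion.2 ⟨c, hcS, hx⟩)
  have hle := hM.card_le _ (hM.isPacking.exchange hS hR hcover disjoint_uncovered) hW
  rw [card_union_of_disjoint hne] at hle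
  have := card_sdiff_add_card_eq_card hR
  omega

theorem not_adj_of_mem_uncovered (hM : IsMaxMatching G W M) (hu : u ∈ uncovered W M)
    (hv : v ∈ uncovered W M) : ¬G.Adj u v := fun huv ↦ by
  have := hM.card_le_of_exchange (empty_subset M) (S := {{u, v}})
    ⟨by simpa using isNClique_pair huv, by simp⟩ (by simp [insert_subset_iff, hu, hv])
  simp at this

theorem not_augmenting_path_three (hM : IsMaxMatching G W M) (hab : {a, b} ∈ M) (hne : a ≠ b)
    (hu : u ∈ uncovered W M) (hv : v ∈ uncovered W M) (huv : u ≠ v) (hua : G.Adj u a) :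
    ¬G.Adj v b := fun hvb ↦ by
  have hnot {w} (hw : w ∈ uncovered W M) : w ∉ ({a, b} : Finset V) :=
    fun h ↦ disjoint_left.1 disjoint_uncovered hw (mem_biUnion.2 ⟨_, hab, h⟩)
  have hnu := hnot hu
  have hnv := hnot hv
  simp only [mem_insert, mem_singleton, not_or] at hnu hnv
  obtain ⟨h₁, hcard₁⟩ := insert_pair_isPacking isPacking_empty hua (by simp) (by simp)
  obtain ⟨h₂, hcard₂⟩ := insert_pair_isPacking h₁ hvb (by simp [huv.symm, hnv.1])
    (by simp [hne.symm, Ne.symm hnu.2])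
  have hle := hM.card_le_of_exchange (singleton_subset_iff.2 hab) h₂
    (by simp [insert_subset_iff, hu, hv])
  rw [hcard₂, hcard₁, card_empty, card_singleton] at hle
  omega

theorem not_augmenting_path_five (hM : IsMaxMatching G W M) (hab : {a, b} ∈ M)
    (hab' : {a', b'} ∈ M) (hne : a ≠ b) (hne' : a' ≠ b')
    (hdisj : Disjoint ({a, b} : Finset V) {a', b'}) (hu : u ∈ uncovered W M)
    (hv : v ∈ uncovered W M) (huv : u ≠ v) (hua : G.Adj u a)
    (hva' : G.Adj v a') : ¬G.Adj b b' := fun hbb' ↦ by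
  have hnot {w} (hw : w ∈ uncovered W M) : w ∉ ({a, b} ∪ {a', b'} : Finset V) :=
    fun h ↦ disjoint_left.1 disjoint_uncovered hw <| (mem_union.1 h).elim
      (fun h ↦ mem_biUnion.2 ⟨_, hab, h⟩) (fun h ↦ mem_biUnion.2 ⟨_, hab', h⟩)
  have hnu := hnot hu
  have hnv := hnot hv
  simp only [mem_union, mem_insert, mem_singleton, not_or, disjoint_insert_left,
    disjoint_singleton_left] at hnu hnv hdisj
  obtain ⟨h₁, hcard₁⟩ := insert_pair_isPacking isPacking_empty hua (by simp) (by simp)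
  obtain ⟨h₂, hcard₂⟩ := insert_pair_isPacking h₁ hva' (by grind) (by grind)
  obtain ⟨h₃, hcard₃⟩ := insert_pair_isPacking h₂ hbb' (by grind) (by grind)
  have hle := hM.card_le_of_exchange (R := {{a, b}, {a', b'}})
    (insert_subset hab (singleton_subset_iff.2 hab')) h₃
    (by simp [insert_subset_iff, hu, hv])
  have := hle.trans card_le_two
  rw [hcard₃, hcard₂, hcard₁, card_empty] at this
  omega

theorem not_adj_partner_of_mem_uncovered (hM : IsMaxMatching G W M) (ha : a ∈ forks G W M)
    (hab : {a, b} ∈ M) (hne : a ≠ b) (hu : u ∈ uncovered W M) : ¬G.Adj u b := by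
  obtain ⟨v, hv, hvu, hva⟩ := exists_mem_uncovered_adj_ne ha u
  exact hM.not_augmenting_path_three hab hne hv hu hvu hva

theorem exists_isPartner_forks (hM : IsMaxMatching G W M) :
    ∃ p, IsPartner G M (forks G W M) p := by
  obtain ⟨p, hp⟩ := exists_partner_of_isNClique_two hM.isPacking.prop
  have hp' (a) (ha : a ∈ forks G W M) := hp a (mem_filter.1 ha).1
  refine ⟨p, fun a ha ↦ (hp' a ha).1, fun a ha ↦ (hp' a ha).2, fun a ha hpa ↦ ?_⟩
  obtain ⟨v, hv, -, hva⟩ := exists_mem_uncovered_adj_ne hpa a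
  exact hM.not_adj_partner_of_mem_uncovered ha (hp' a ha).2 (hp' a ha).1.ne hv hva

theorem isIndepSet_image_partner_union_uncovered (hM : IsMaxMatching G W M) {p : V → V}
    (hp : IsPartner G M (forks G W M) p) :
    G.IsIndepSet ((forks G W M).image p ∪ uncovered W M : Finset V) := by
  have hfork (a) (ha : a ∈ forks G W M) (u) (hu : u ∈ uncovered W M) : ¬G.Adj u (p a) :=
    hM.not_adj_partner_of_mem_uncovered ha (hp.pair_mem a ha) (hp.adj a ha).ne hu
  have hforks (a) (ha : a ∈ forks G W M) (b) (hb : b ∈ forks G W M) (hab : a ≠ b) :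
      ¬G.Adj (p a) (p b) := by
    obtain ⟨u, hu, -, hua⟩ := exists_mem_uncovered_adj_ne ha a
    obtain ⟨v, hv, hvu, hvb⟩ := exists_mem_uncovered_adj_ne hb u
    refine hM.not_augmenting_path_five (hp.pair_mem a ha) (hp.pair_mem b hb) (hp.adj a ha).ne
      (hp.adj b hb).ne (hM.isPacking.pairwiseDisjoint (hp.pair_mem a ha) (hp.pair_mem b hb)
        fun h ↦ hab (hp.eq_of_mem_pair ha hb (h ▸ mem_insert_self _ _))) hu hv hvu.symm hua hvb
  intro x hx y hy hxy
  rcases mem_union.1 hx with hx | hx <;> rcases mem_union.1 hy with hy | hy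
  · obtain ⟨a, ha, rfl⟩ := mem_image.1 hx
    obtain ⟨b, hb, rfl⟩ := mem_image.1 hy
    exact hforks a ha b hb (ne_of_apply_ne p hxy)
  · obtain ⟨a, ha, rfl⟩ := mem_image.1 hx
    exact fun h ↦ hfork a ha y hy h.symm
  · obtain ⟨b, hb, rfl⟩ := mem_image.1 hy
    exact hfork b hb x hx
  · exact hM.not_adj_of_mem_uncovered hx hy

theorem exists_isIndepSet_card_eq (hM : IsMaxMatching G W M) :
    ∃ I : Finset V, G.IsIndepSet I ∧ #I = #(forks G W M) + #(uncovered W M) := by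
  obtain ⟨p, hp⟩ := hM.exists_isPartner_forks
  refine ⟨_, hM.isIndepSet_image_partner_union_uncovered hp, ?_⟩
  rw [card_union_of_disjoint (disjoint_uncovered.symm.mono_left hp.image_subset_biUnion),
    card_image_of_injOn (hp.injOn hM.isPacking)]

theorem degree_le (hM : IsMaxMatching G W M) (hu : u ∈ uncovered W M) :
    G.degree u ≤ #W + #{a ∈ forks G W M | G.Adj u a} + #(strayNeighbors G W M u) := by
  have hsub : G.neighborFinset u ⊆
      W ∪ {a ∈ forks G W M | G.Adj u a} ∪ strayNeighbors G W M u := fun x hx ↦ by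
    rw [G.mem_neighborFinset] at hx
    have hxU : x ∉ uncovered W M := fun h ↦ hM.not_adj_of_mem_uncovered hu h hx
    simp only [uncovered, mem_sdiff, mem_univ, true_and, not_not, mem_union] at hxU
    simp only [mem_union, strayNeighbors, mem_filter, mem_sdiff, hx, and_true]
    tauto
  exact (card_le_card hsub).trans <| (card_union_le _ _).trans <| by gcongr; exact card_union_le _ _

theorem two_mul_card_forks_add_sum_le (hM : IsMaxMatching G W M) {S : Finset V}
    (hS : S ⊆ uncovered W M) :
    2 * #(forks G W M) + ∑ u ∈ S, #(strayNeighbors G W M u) ≤ Fintype.card V := by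
  obtain ⟨p, hp⟩ := hM.exists_isPartner_forks
  have hdisj : Disjoint (forks G W M ∪ (forks G W M).image p)
      (S.biUnion (strayNeighbors G W M)) := by
    refine (disjoint_biUnion_right _ _ _).2 fun u hu ↦ disjoint_union_left.2 ⟨?_, ?_⟩
    · exact sdiff_disjoint.symm.mono_right (filter_subset _ _)
    · refine disjoint_left.2 (forall_mem_image.2 fun a ha hmem ↦ ?_)
      exact hM.not_adj_partner_of_mem_uncovered ha (hp.pair_mem a ha) (hp.adj a ha).ne (hS hu)
        (mem_filter.1 hmem).2
  calc 2 * #(forks G W M) + ∑ u ∈ S, #(strayNeighbors G W M u)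
      = #(forks G W M ∪ (forks G W M).image p) + #(S.biUnion (strayNeighbors G W M)) := by
        rw [card_union_of_disjoint hp.disjoint_image, card_image_of_injOn (hp.injOn hM.isPacking),
          two_mul, card_biUnion (pairwiseDisjoint_strayNeighbors.subset (coe_subset.2 hS))]
    _ = #(forks G W M ∪ (forks G W M).image p ∪ S.biUnion (strayNeighbors G W M)) :=
        (card_union_of_disjoint hdisj).symm
    _ ≤ Fintype.card V := card_le_univ _

theorem exists_isIndepSet_three_mul_le (hM : IsMaxMatching G W M) {d : ℝ}
    (hd : ∀ v, d ≤ G.degree v) (hU : 3 ≤ #(uncovered W M)) :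
    ∃ I : Finset V, G.IsIndepSet I ∧ 3 * d ≤ #I + 3 * #W + Fintype.card V := by
  obtain ⟨S, hS, hS3⟩ := exists_subset_card_eq hU
  obtain ⟨I, hI, hIcard⟩ := hM.exists_isIndepSet_card_eq
  have hdeg : ∀ u ∈ S, d ≤ #W + #(forks G W M) + #(strayNeighbors G W M u) := fun u hu ↦
    (hd u).trans <| mod_cast (hM.degree_le (hS hu)).trans (by gcongr; exact filter_subset _ _)
  have hsum := sum_le_sum hdeg
  simp only [sum_add_distrib, sum_const, hS3, nsmul_eq_mul, Nat.cast_ofNat, ← Nat.cast_sum] at hsum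
  have hstray : (2 * #(forks G W M) + ∑ u ∈ S, #(strayNeighbors G W M u) : ℝ) ≤ Fintype.card V :=
    mod_cast hM.two_mul_card_forks_add_sum_le hS
  have hIcard' : (#I : ℝ) = #(forks G W M) + #(uncovered W M) := mod_cast hIcard
  have : (0 : ℝ) ≤ #(uncovered W M) := by positivity
  exact ⟨I, hI, by linarith⟩

theorem mul_card_filter_lt_card_strayNeighbors_le (hM : IsMaxMatching G W M) (K : ℝ) :
    K * #{u ∈ uncovered W M | K < #(strayNeighbors G W M u)} ≤ Fintype.card V := by
  set S := {u ∈ uncovered W M | K < #(strayNeighbors G W M u)}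
  calc K * #S = ∑ _u ∈ S, K := by rw [sum_const, nsmul_eq_mul, mul_comm]
    _ ≤ ∑ u ∈ S, (#(strayNeighbors G W M u) : ℝ) :=
        sum_le_sum fun u hu ↦ (mem_filter.1 hu).2.le
    _ ≤ Fintype.card V := mod_cast
        (Nat.le_add_left _ _).trans (hM.two_mul_card_forks_add_sum_le (filter_subset _ _))

theorem mul_add_mul_card_uncovered_le (hM : IsMaxMatching G W M) {k t h K d β : ℝ} (hk : 0 ≤ k)
    (ht : 0 ≤ t) (hdeg : d ≤ G.degree u) (hindep : ∀ I : Finset V, G.IsIndepSet I → #I ≤ β)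
    (hβ : k * h + t * β ≤ (k + t) * (d - #W - K)) (hu : u ∈ uncovered W M)
    (hstray : #(strayNeighbors G W M u) ≤ K) :
    k * h + t * #(uncovered W M) ≤ k * #{a ∈ forks G W M | G.Adj u a} := by
  obtain ⟨I, hI, hIcard⟩ := hM.exists_isIndepSet_card_eq
  have hIcard' : (#I : ℝ) = #(forks G W M) + #(uncovered W M) := mod_cast hIcard
  set x := #{a ∈ forks G W M | G.Adj u a}
  have hle : (G.degree u : ℝ) ≤ #W + x + #(strayNeighbors G W M u) := mod_cast hM.degree_le hu
  have hx : (x : ℝ) ≤ #(forks G W M) := mod_cast card_filter_le _ _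
  have hU : t * #(uncovered W M) ≤ t * (β - x) :=
    mul_le_mul_of_nonneg_left (by linarith [hindep I hI]) ht
  have hdx : (k + t) * (d - #W - K) ≤ (k + t) * x :=
    mul_le_mul_of_nonneg_left (by linarith) (add_nonneg hk ht)
  linarith

end IsMaxMatching

end MaxMatching

section AlmostCover

variable {V : Type*} {G : SimpleGraph V} {F₀ : Finset (Finset V)} {s t N : ℕ} {h K d β : ℝ}

theorem exists_packing_mul_card_sdiff_le [Fintype V] [DecidableEq V] (ht : 0 < t) (hts : t < s)
    (hN : 0 < N) (hK : 0 ≤ K) (hF₀ : IsPacking (G.IsNClique 2) F₀) (hdeg : ∀ v, d ≤ G.degree v)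
    (hindep : ∀ I : Finset V, G.IsIndepSet I → #I ≤ β)
    (hh : Fintype.card V * (s - t : ℕ) + N * (t * 2 ^ N) ≤ N * h)
    (hβ : (s - t : ℕ) * h + t * β ≤ s * (d - #(F₀.biUnion id) - K)) :
    ∃ F, IsPacking (IsTile G s t) F ∧ F₀ ⊆ F ∧
      K * #(univ \ F.biUnion id) ≤ Fintype.card V + K * N := by
  obtain ⟨M, hM⟩ := exists_isMaxMatching G (F₀.biUnion id)
  obtain ⟨p, hp⟩ := hM.exists_isPartner_forks
  set W := F₀.biUnion id
  set good := {u ∈ uncovered W M | (#(strayNeighbors G W M u) : ℝ) ≤ K} with hgood_def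
  set bad := {u ∈ uncovered W M | K < #(strayNeighbors G W M u)} with hbad_def
  have hbad : K * #bad ≤ Fintype.card V := hM.mul_card_filter_lt_card_strayNeighbors_le K
  have hgood_sub : good ⊆ uncovered W M := filter_subset _ _
  have hgood : Disjoint good ((F₀ ∪ M).biUnion id) := by
    rw [union_biUnion]
    exact sdiff_disjoint.mono_left hgood_sub
  have hst : (s : ℝ) = (s - t : ℕ) + t := mod_cast (Nat.sub_add_cancel hts.le).symm
  have hfork (u) (hu : u ∈ good) :
      (s - t : ℕ) * h + t * #good ≤ (s - t : ℕ) * #{a ∈ forks G W M | G.Adj u a} :=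
    le_trans (by gcongr) <| hM.mul_add_mul_card_uncovered_le (by positivity) (by positivity)
      (hdeg u) hindep (hst ▸ hβ) (hgood_sub hu) (mem_filter.1 hu).2
  obtain ⟨F, hF, hcover, hlt, hkeep⟩ := exists_packing_card_sdiff_lt ht hts hN
    (hF₀.union hM.isPacking hM.disjoint |>.mono fun _ ↦ Or.inl)
    (hp.mono_left subset_union_right) hgood (hh.trans' (by gcongr; exact card_le_univ _)) hfork
  refine ⟨F, hF, fun c hc ↦ hkeep c (mem_union_left _ hc) ?_, ?_⟩
  · exact hM.disjoint.mono (subset_biUnion_of_mem id hc) (filter_subset _ _)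
  have hsub : univ \ F.biUnion id ⊆ (good \ F.biUnion id) ∪ bad := fun u hu ↦ by
    have hu' := (mem_sdiff.1 hu).2
    have huU : u ∈ uncovered W M :=
      mem_sdiff.2 ⟨mem_univ u, fun h ↦ hu' (hcover (by rwa [union_biUnion]))⟩
    rw [mem_union, mem_sdiff, hgood_def, hbad_def, mem_filter, mem_filter]
    exact (le_or_gt _ K).imp (fun h ↦ ⟨⟨huU, h⟩, hu'⟩) (fun h ↦ ⟨huU, h⟩)
  have hcard : (#(univ \ F.biUnion id) : ℝ) ≤ N + #bad :=
    mod_cast ((card_le_card hsub).trans (card_union_le _ _)).trans (by gcongr)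
  linarith [mul_le_mul_of_nonneg_left hcard hK]

end AlmostCover

section Asymptotics

open Filter

variable {s t : ℕ}

theorem eventually_le_mul_natCast {ε : ℝ} (hε : 0 < ε) (b : ℝ) :
    ∀ᶠ n : ℕ in atTop, b ≤ ε * n :=
  (tendsto_natCast_atTop_atTop.const_mul_atTop hε).eventually_ge_atTop b

theorem exists_eventually_exists_packing_card_sdiff_le {γ : ℝ} (ht : 0 < t) (hts : t < s)
    (hγ : 0 < γ) : ∃ C : ℕ, ∀ᶠ n : ℕ in atTop, ∀ (G : SimpleGraph (Fin n)) F₀,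
      IsPacking (G.IsNClique 2) F₀ → #(F₀.biUnion id) ≤ γ / (8 * s) * n →
      (∀ v, (t / (s + t) - γ / (8 * s)) * n ≤ G.degree v) →
      (∀ I : Finset (Fin n), G.IsIndepSet I → #I ≤ (s / (s + t) - γ) * n) →
      ∃ F, IsPacking (IsTile G s t) F ∧ F₀ ⊆ F ∧ #(univ \ F.biUnion id) ≤ C := by
  have hs : (0 : ℝ) < s := mod_cast ht.trans hts
  have ht1 : (1 : ℝ) ≤ t := mod_cast ht
  obtain ⟨N, hN⟩ := exists_nat_ge (8 * s * s / γ)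
  have hN' : (0 : ℝ) < N := lt_of_lt_of_le (by positivity) hN
  obtain ⟨C, hC⟩ := exists_nat_ge (4 * s / γ + N)
  refine ⟨C, ?_⟩
  filter_upwards [eventually_le_mul_natCast (ε := γ / (8 * s)) (by positivity) (t * 2 ^ N),
    eventually_gt_atTop 0] with n hn hn0 G F₀ hF₀ hcover hdeg hindep
  have hn0' : (0 : ℝ) < n := mod_cast hn0
  have hk : ((s - t : ℕ) : ℝ) ≤ s := mod_cast Nat.sub_le s t
  have hh : Fintype.card (Fin n) * ((s - t : ℕ) : ℝ) + N * (t * 2 ^ N) ≤ N * (γ / (4 * s) * n) :=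
    calc _ ≤ n * (s : ℝ) + N * (γ / (8 * s) * n) := by rw [Fintype.card_fin]; gcongr
      _ = 8 * s * s / γ * (γ / (8 * s) * n) + N * (γ / (8 * s) * n) := by field_simp
      _ ≤ N * (γ / (8 * s) * n) + N * (γ / (8 * s) * n) := by gcongr
      _ = N * (γ / (4 * s) * n) := by ring
  have hβ : (s - t : ℕ) * (γ / (4 * s) * n) + t * ((s / (s + t) - γ) * n) ≤
      s * ((t / (s + t) - γ / (8 * s)) * n - #(F₀.biUnion id) - γ / (4 * s) * n) :=
    calc _ ≤ s * (γ / (4 * s) * n) + (t * (s / (s + t)) * n - 1 * (γ * n)) := by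
          rw [sub_mul, mul_sub, ← mul_assoc (t : ℝ)]; gcongr
      _ ≤ s * ((t / (s + t) - γ / (8 * s)) * n - γ / (8 * s) * n - γ / (4 * s) * n) := by
          have : 0 ≤ γ * (s + t) := by positivity
          field_simp
          linarith
      _ ≤ _ := by gcongr
  obtain ⟨F, hF, hsub, hle⟩ := exists_packing_mul_card_sdiff_le ht hts (Nat.cast_pos.1 hN')
    (by positivity) hF₀ hdeg hindep hh hβ
  refine ⟨F, hF, hsub, Nat.cast_le.1 (le_trans ?_ hC)⟩
  rw [Fintype.card_fin] at hle
  refine le_of_mul_le_mul_left (hle.trans_eq ?_) (show 0 < γ / (4 * s) * n by positivity)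
  field_simp

theorem exists_forall_eventually_exists_packing_card_sdiff_lt {c : ℝ} (hc : 0 < c) (ht : 0 < t)
    (hts : t < s) : ∃ N : ℕ, ∀ C : ℕ, ∀ᶠ m : ℕ in atTop, ∀ {n : ℕ} (G : SimpleGraph (Fin n)) F D p,
      IsPacking (IsTile G s t) F → IsPartner G F D p → #D = m →
      (∀ x, c * m ≤ #{a ∈ D | G.Adj x a}) → #(univ \ F.biUnion id) ≤ C →
      ∃ F', IsPacking (IsTile G s t) F' ∧ #(univ \ F'.biUnion id) < N ∧
        ∀ e ∈ F, Disjoint e D → e ∈ F' := by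
  have hk : (1 : ℝ) ≤ (s - t : ℕ) := mod_cast Nat.sub_pos_of_lt hts
  obtain ⟨N, hN⟩ := exists_nat_ge (4 * (s - t : ℕ) / c)
  have hN' : (0 : ℝ) < N := lt_of_lt_of_le (by positivity) hN
  refine ⟨N, fun C ↦ ?_⟩
  filter_upwards [eventually_le_mul_natCast (ε := c / 4) (by positivity) (t * 2 ^ N),
    eventually_le_mul_natCast (ε := c / 2) (by positivity) (t * C)]
    with m hmN hmC n G F D p hF hp hD hnbr hC
  have hh : #D * ((s - t : ℕ) : ℝ) + N * (t * 2 ^ N) ≤ N * (c / 2 * m) :=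
    calc _ ≤ m * ((s - t : ℕ) : ℝ) + N * (c / 4 * m) := by rw [hD]; gcongr
      _ = 4 * (s - t : ℕ) / c * (c / 4 * m) + N * (c / 4 * m) := by field_simp
      _ ≤ N * (c / 4 * m) + N * (c / 4 * m) := by gcongr
      _ = N * (c / 2 * m) := by ring
  have hdeg (u) : (s - t : ℕ) * (c / 2 * m) + t * #(univ \ F.biUnion id) ≤
      (s - t : ℕ) * #{a ∈ D | G.Adj u a} :=
    calc _ ≤ (s - t : ℕ) * (c / 2 * m) + t * (C : ℝ) := by gcongr
      _ ≤ (s - t : ℕ) * (c / 2 * m) + 1 * (c / 2 * m) := by rw [one_mul]; gcongr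
      _ ≤ (s - t : ℕ) * (c / 2 * m) + (s - t : ℕ) * (c / 2 * m) := by gcongr
      _ = (s - t : ℕ) * (c * m) := by ring
      _ ≤ _ := by gcongr; exact hnbr u
  obtain ⟨F', hF', hcover, hlt, hkeep⟩ := exists_packing_card_sdiff_lt ht hts (Nat.cast_pos.1 hN')
    hF hp sdiff_disjoint hh fun u _ ↦ hdeg u
  refine ⟨F', hF', hlt.trans_le' (card_le_card fun u hu ↦ ?_), hkeep⟩
  have hu' := (Finset.mem_sdiff.1 hu).2
  exact Finset.mem_sdiff.2 ⟨Finset.mem_sdiff.2 ⟨mem_univ u, fun h ↦ hu' (hcover h)⟩, hu'⟩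

theorem eventually_exists_isAbsorber_and_isRootedPacking {c δ : ℝ} (hδ : 0 < δ) (hδc : δ ≤ c) :
    ∀ᶠ n : ℕ in atTop, ∀ G : SimpleGraph (Fin n), (∀ x, (c + δ) * n ≤ G.degree x) →
      ∃ 𝒜 ℛ D, IsPacking (G.IsNClique 2) 𝒜 ∧ IsAbsorber G (δ / 2) 2 𝒜 ∧
        IsRootedPacking G 2 (𝒜.biUnion id) ℛ D ∧ #((𝒜 ∪ ℛ).biUnion id) ≤ δ * n ∧
        #D = ⌊δ / 4 * n⌋₊ ∧ ∀ x, c / 4 * ⌊δ / 4 * n⌋₊ ≤ #{y ∈ D | G.Adj x y} := by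
  have hc : 0 < c := hδ.trans_le hδc
  filter_upwards
    [eventually_exists_isAbsorber (g := 2) (c := c) two_pos (half_pos hδ) (by linarith),
    eventually_exists_isRootedPacking hc (μ := δ / 8) (by positivity),
    eventually_le_mul_natCast (ε := δ / 4) (by positivity) 1, eventually_gt_atTop 0]
    with n habs hroot hn hn0 G hdeg
  have : 0 < δ * n := by positivity
  have hcn : 0 < c * n := by positivity
  have hdeg' (x) : c * n + δ * n ≤ G.degree x := (add_mul c δ n).symm.trans_le (hdeg x)
  have hrobust {B : ℝ} (hB : B ≤ δ * n) : HasRobustCliques G 2 B :=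
    hasRobustCliques_two fun x ↦ by linarith [hdeg' x]
  obtain ⟨𝒜, h𝒜, habs⟩ := habs G (hrobust (by linarith)) fun x ↦ by linarith [hdeg' x]
  have hm : (⌊δ / 4 * n⌋₊ : ℝ) ≤ δ / 4 * n := Nat.floor_le (by positivity)
  have h𝒜card := habs.2.1
  obtain ⟨ℛ, D, hℛ, hD, hnbr⟩ := hroot G 2 ⌊δ / 4 * n⌋₊ (δ * n) (𝒜.biUnion id)
    (by linarith [Nat.div_two_lt_floor hn]) (hrobust le_rfl) hdeg' (by push_cast; linarith)
  have hℛcard : (#(ℛ.biUnion id) : ℝ) ≤ 2 * ⌊δ / 4 * n⌋₊ := mod_cast hD ▸ hℛ.card_biUnion_le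
  refine ⟨𝒜, ℛ, D, h𝒜, habs, hℛ, ?_, hD, hnbr⟩
  have hunion : (#((𝒜 ∪ ℛ).biUnion id) : ℝ) ≤ #(𝒜.biUnion id) + #(ℛ.biUnion id) := by
    rw [union_biUnion]
    exact_mod_cast card_union_le _ _
  linarith

end Asymptotics

section AbsorbingCover

open Filter

/-- Every set of at least `a` vertices spans more than `b` edges. -/
def IsLocallyDense {V : Type*} (G : SimpleGraph V) (a b : ℝ) : Prop :=
  ∀ X : Finset V, a ≤ #X → b < edgesIn G (X : Set V)

theorem not_isLocallyDense_iff {V : Type*} {G : SimpleGraph V} {a b : ℝ} :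
    ¬IsLocallyDense G a b ↔ ∃ X : Finset V, a ≤ #X ∧ edgesIn G (X : Set V) ≤ b := by
  simp only [IsLocallyDense, not_forall, exists_prop, not_lt]

/-- A family of pairwise disjoint vertex sets satisfying `P` that covers all but at most `C`
vertices and contains a `(δ, g)`-absorber. -/
def HasAbsorbingCover {n : ℕ} (G : SimpleGraph (Fin n)) (P : Finset (Fin n) → Prop) (C : ℕ)
    (δ : ℝ) (g : ℕ) : Prop :=
  ∃ 𝒞 : Finset (Finset (Fin n)), (𝒞 : Set (Finset (Fin n))).PairwiseDisjoint id ∧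
    (∀ c ∈ 𝒞, P c) ∧ #(univ \ 𝒞.biUnion id) ≤ C ∧ ∃ 𝒜 ⊆ 𝒞, IsAbsorber G δ g 𝒜

theorem IsLocallyDense.card_lt_of_isIndepSet {V : Type*} [Finite V] {G : SimpleGraph V}
    {a b : ℝ} (hG : IsLocallyDense G a b) (hb : 0 ≤ b) {I : Finset V} (hI : G.IsIndepSet I) :
    #I < a := by
  have := Fintype.ofFinite V
  by_contra! hIa
  have hzero : edgesIn G (I : Set V) ≤ #(∅ : Finset V) * Fintype.card V :=
    edgesIn_le_card_mul fun x hx y hy hxy ↦ absurd hxy (hI hx hy hxy.ne)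
  rw [card_empty, zero_mul, Nat.le_zero] at hzero
  exact hb.not_gt (by simpa [hzero] using hG I hIa)

theorem exists_eventually_hasAbsorbingCover_isTile {s t : ℕ} (ht : 0 < t) (hts : t < s) :
    ∃ C : ℕ, ∀ γ : ℝ, 0 < γ → ∃ δ₀ : ℝ, 0 < δ₀ ∧ ∀ δ : ℝ, 0 < δ → δ ≤ δ₀ →
      ∀ᶠ n : ℕ in atTop, ∀ G : SimpleGraph (Fin n),
        (∀ v, (t / (s + t) - δ) * n ≤ G.degree v) →
        IsLocallyDense G ((s / (s + t) - γ) * n) (δ * n ^ 2) →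
        HasAbsorbingCover G (IsTile G s t) C (δ / 2) 2 := by
  have hs : (0 : ℝ) < s := mod_cast ht.trans hts
  have : (0 : ℝ) < t := mod_cast ht
  set c : ℝ := t / (2 * (s + t)) with hc_def
  have : 0 < c := by positivity
  have hct : (t / (s + t) : ℝ) = 2 * c := by rw [hc_def]; field_simp
  obtain ⟨N, hfinish⟩ :=
    exists_forall_eventually_exists_packing_card_sdiff_lt (c := c / 4) (by positivity) ht hts
  refine ⟨N, fun γ hγ ↦ ⟨min (c / 2) (γ / (8 * s)), by positivity, fun δ hδ hδ₀ ↦ ?_⟩⟩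
  have hδc : δ ≤ c / 2 := hδ₀.trans (min_le_left _ _)
  have hδγ : δ ≤ γ / (8 * s) := hδ₀.trans (min_le_right _ _)
  obtain ⟨C, hcover⟩ := exists_eventually_exists_packing_card_sdiff_le ht hts hγ
  have htendsto : Tendsto (fun n : ℕ ↦ ⌊δ / 4 * (n : ℝ)⌋₊) atTop atTop :=
    tendsto_nat_floor_atTop.comp (tendsto_natCast_atTop_atTop.const_mul_atTop (by positivity))
  filter_upwards [eventually_exists_isAbsorber_and_isRootedPacking hδ (c := c) (by linarith),
    hcover, htendsto.eventually (hfinish C)] with n hreserve hcover hfinish G hdeg hdense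
  obtain ⟨𝒜, ℛ, D, h𝒜, habs, hℛ, hcard, hD, hnbr⟩ :=
    hreserve G fun x ↦ le_trans (by gcongr; linarith) (hdeg x)
  obtain ⟨p, hp⟩ := hℛ.exists_isPartner
  obtain ⟨F, hF, hsub, hC⟩ := hcover G (𝒜 ∪ ℛ) (h𝒜.union hℛ.isPacking hℛ.disjoint)
    (hcard.trans (by gcongr)) (fun v ↦ le_trans (by gcongr) (hdeg v))
    fun I hI ↦ (hdense.card_lt_of_isIndepSet (by positivity) hI).le
  obtain ⟨F', hF', hlt, hkeep⟩ :=
    hfinish G F D p hF (hp.mono_left (subset_union_right.trans hsub)) hD hnbr hC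
  refine ⟨F', hF'.pairwiseDisjoint, hF'.prop, hlt.le, 𝒜, fun e he ↦ ?_, habs⟩
  exact hkeep e (hsub (mem_union_left _ he))
    (hℛ.disjoint.mono (subset_biUnion_of_mem id he) hℛ.subset_biUnion)

theorem eventually_hasAbsorbingCover_isNClique {γ δ : ℝ} (hδ : 0 < δ) (hδ' : δ ≤ 1 / 8)
    (hδγ : 5 * δ ≤ γ) :
    ∀ᶠ n : ℕ in atTop, ∀ G : SimpleGraph (Fin n), (∀ v, (1 / 2 - δ) * n ≤ G.degree v) →
      IsLocallyDense G ((1 / 2 - γ) * n) (δ * n ^ 2) →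
      HasAbsorbingCover G (fun c ↦ G.IsNClique 2 c ∨ G.IsNClique 3 c) 2 (δ / 2) 3 := by
  filter_upwards [eventually_exists_isAbsorber (g := 3) (c := 1 / 4) three_pos (half_pos hδ)
    (by linarith), eventually_gt_atTop 0] with n habs hn G hdeg hdense
  have hδn : 0 < δ * n := by positivity
  have hrobust : HasRobustCliques G 3 (δ / 2 * n) := hasRobustCliques_three fun v ↦ by
    have hv := hdense (G.neighborFinset v) <| by
      rw [G.card_neighborFinset_eq_degree]
      exact le_trans (by gcongr; linarith) (hdeg v)
    rw [G.coe_neighborFinset] at hv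
    refine hv.trans_le' ?_
    rw [Fintype.card_fin]
    nlinarith
  obtain ⟨𝒜, h𝒜, habs⟩ := habs G hrobust fun x ↦ le_trans (by gcongr; linarith) (hdeg x)
  obtain ⟨M, hM⟩ := exists_isMaxMatching G (𝒜.biUnion id)
  have hpack : IsPacking (fun c ↦ G.IsNClique 2 c ∨ G.IsNClique 3 c) (𝒜 ∪ M) :=
    (h𝒜.mono fun _ ↦ Or.inr).union (hM.isPacking.mono fun _ ↦ Or.inl) hM.disjoint
  refine ⟨𝒜 ∪ M, hpack.pairwiseDisjoint, hpack.prop, ?_, 𝒜, subset_union_left, habs⟩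
  rw [union_biUnion]
  by_contra! hU
  obtain ⟨I, hI, hle⟩ := hM.exists_isIndepSet_three_mul_le hdeg hU
  rw [Fintype.card_fin] at hle
  have := hdense.card_lt_of_isIndepSet (by positivity) hI
  have := habs.2.1
  have : 5 * δ * n ≤ γ * n := by gcongr
  linarith

theorem degR_eq_degree {V : Type*} [Fintype V] (G : SimpleGraph V) (v : V) :
    degR G v = G.degree v := by
  rw [degR, Nat.card_eq_fintype_card, G.card_neighborSet_eq_degree]

end AbsorbingCover

/-- Lemma 7.3: almost-covering `G` by copies of `K₂` and `Q_{s,t}`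
(resp. `K₃` and `K₂` in the singular case) including an absorber, unless `G` has a large
sparse vertex subset. Here `t = r - s`. -/
theorem statement13 (r s : ℕ) (hrs : r ≤ 2 * s) (hsr : s < r) :
    ∃ C : ℕ, ∃ γ₀ : ℝ, 0 < γ₀ ∧ ∀ γ : ℝ, 0 < γ → γ ≤ γ₀ →
      ∃ δ₀ : ℝ, 0 < δ₀ ∧ ∀ δ : ℝ, 0 < δ → δ ≤ δ₀ →
        ∃ n₀ : ℕ, ∀ n : ℕ, n₀ ≤ n →
          ∀ G : SimpleGraph (Fin n),
            (∀ v, (1 - (s : ℝ) / (r : ℝ) - δ) * n ≤ (degR G v : ℝ)) →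
            (∃ X : Finset (Fin n), ((s : ℝ) / (r : ℝ) - γ) * n ≤ (X.card : ℝ) ∧
              (edgesIn G (X : Set (Fin n)) : ℝ) ≤ δ * (n : ℝ) ^ 2) ∨
            (r < 2 * s ∧ ∃ 𝒞 : Finset (Finset (Fin n)),
              ((𝒞 : Set (Finset (Fin n))).PairwiseDisjoint id) ∧
              (∀ c ∈ 𝒞, G.IsNClique 2 c ∨
                ∃ f : Qgraph s (r - s) →g G, Function.Injective f ∧
                  Set.range f = (c : Set (Fin n))) ∧
              ((Finset.univ \ 𝒞.biUnion id).card ≤ C) ∧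
              (∃ 𝒜 ⊆ 𝒞, IsAbsorber G (δ / 2) 2 𝒜)) ∨
            (r = 2 * s ∧ ∃ 𝒞 : Finset (Finset (Fin n)),
              ((𝒞 : Set (Finset (Fin n))).PairwiseDisjoint id) ∧
              (∀ c ∈ 𝒞, G.IsNClique 2 c ∨ G.IsNClique 3 c) ∧
              ((Finset.univ \ 𝒞.biUnion id).card ≤ C) ∧
              (∃ 𝒜 ⊆ 𝒞, IsAbsorber G (δ / 2) 3 𝒜)) := by
  simp only [degR_eq_degree, ← Filter.eventually_atTop, ← not_isLocallyDense_iff]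
  have hr : (0 : ℝ) < r := mod_cast (Nat.zero_le s).trans_lt hsr
  rcases hrs.lt_or_eq with hlt | heq
  · have hst : (s : ℝ) + (r - s : ℕ) = r := mod_cast Nat.add_sub_cancel' hsr.le
    have hratio : ((r - s : ℕ) / r : ℝ) = 1 - s / r := by
      rw [eq_sub_iff_add_eq', ← add_div, hst, div_self hr.ne']
    obtain ⟨C, hC⟩ := exists_eventually_hasAbsorbingCover_isTile (s := s) (t := r - s)
      (Nat.sub_pos_of_lt hsr) (by omega)
    simp only [hst, hratio] at hC
    refine ⟨C, 1, one_pos, fun γ hγ _ ↦ ?_⟩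
    obtain ⟨δ₀, hδ₀, hcover⟩ := hC γ hγ
    exact ⟨δ₀, hδ₀, fun δ hδ hδδ₀ ↦ (hcover δ hδ hδδ₀).mono fun n hn G hdeg ↦
      not_or_of_imp fun hdense ↦ Or.inl ⟨hlt, hn G hdeg hdense⟩⟩
  · have hratio : (s / r : ℝ) = 1 / 2 := by
      rw [div_eq_div_iff hr.ne' two_ne_zero, one_mul, mul_comm]
      exact_mod_cast heq.symm
    rw [hratio, sub_half]
    refine ⟨2, 1, one_pos, fun γ hγ _ ↦ ⟨min (1 / 8) (γ / 5), by positivity, fun δ hδ hδ₀ ↦ ?_⟩⟩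
    obtain ⟨hδ8, hδγ⟩ := le_min_iff.1 hδ₀
    exact (eventually_hasAbsorbingCover_isNClique hδ hδ8 (by linarith)).mono fun n hn G hdeg ↦
      not_or_of_imp fun hdense ↦ Or.inr ⟨heq, hn G hdeg hdense⟩
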